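/- Let Ω be an open subset of ℝⁿ and let f = (u₁, v₁) and g = (u₂, v₂) be H-continuous pairs on Ω. Let m(x) = min{u₁(x)u₂(x), u₁(x)v₂(x), v₁(x)u₂(x), v₁(x)v₂(x)} and M(x) = max of the same four numbers. Then both pairs F(I(S(M))) = (I(I(S(M))), S(I(S(M)))) and F(S(I(m))) = (I(S(I(m))), S(S(I(m)))) are H-continuous, both satisfy the inclusion m(x) ≤ (lower component)(x) ≤ (upper component)(x) ≤ M(x) for all x ∈ Ω, and consequently both are equal to f ⊗ g, the unique H-continuous pair contained in the pointwise interval product f × g. -/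

import Mathlib

open Set

/-- Points of `ℝⁿ`. -/
abbrev Pt (n : ℕ) := EuclideanSpace ℝ (Fin n)

/-- Lower Baire operator `I(D,Ω,f)(x) = sup_{δ>0} inf { f y : y ∈ B_δ(x) ∩ D }`,
where `B_δ(x) = { y ∈ Ω : ‖y - x‖ < δ }`. -/
noncomputable def Ilow {n : ℕ} (D Om : Set (Pt n)) (f : Pt n → ℝ) (x : Pt n) : ℝ :=
  sSup {a : ℝ | ∃ δ : ℝ, 0 < δ ∧
    a = sInf (f '' {y | y ∈ Om ∧ ‖y - x‖ < δ ∧ y ∈ D})}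

/-- Upper Baire operator `S(D,Ω,f)(x) = inf_{δ>0} sup { f y : y ∈ B_δ(x) ∩ D }`. -/
noncomputable def Shigh {n : ℕ} (D Om : Set (Pt n)) (f : Pt n → ℝ) (x : Pt n) : ℝ :=
  sInf {a : ℝ | ∃ δ : ℝ, 0 < δ ∧
    a = sSup (f '' {y | y ∈ Om ∧ ‖y - x‖ < δ ∧ y ∈ D})}

/-- `f`, defined on `D ⊆ Ω`, is locally bounded relative to `Ω`. -/
def LocBddOn {n : ℕ} (Om D : Set (Pt n)) (f : Pt n → ℝ) : Prop :=
  ∀ x ∈ Om, ∃ δ : ℝ, 0 < δ ∧ ∃ M : ℝ,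
    ∀ y, y ∈ Om → ‖y - x‖ < δ → y ∈ D → |f y| < M

/-- `(u, v)` encodes an interval-valued function `x ↦ [u x, v x]` on `Om`. -/
def IntervalPair {n : ℕ} (Om : Set (Pt n)) (u v : Pt n → ℝ) : Prop :=
  LocBddOn Om Om u ∧ LocBddOn Om Om v ∧ ∀ x ∈ Om, u x ≤ v x

/-- The pair `(u, v)` is S-continuous on `Om`: `I(u) = u` and `S(v) = v`. -/
def SCont {n : ℕ} (Om : Set (Pt n)) (u v : Pt n → ℝ) : Prop :=
  ∀ x ∈ Om, Ilow Om Om u x = u x ∧ Shigh Om Om v x = v x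

/-- The pair `(u, v)` is Hausdorff continuous on `Om`. -/
def HCont {n : ℕ} (Om : Set (Pt n)) (u v : Pt n → ℝ) : Prop :=
  ∀ p q : Pt n → ℝ, LocBddOn Om Om p → LocBddOn Om Om q →
    (∀ x ∈ Om, u x ≤ p x ∧ p x ≤ q x ∧ q x ≤ v x) →
    ∀ x ∈ Om, Ilow Om Om p x = u x ∧ Shigh Om Om q x = v x

/-- `(u, v)` is an H-continuous interval pair on `Om`. -/
def HContPair {n : ℕ} (Om : Set (Pt n)) (u v : Pt n → ℝ) : Prop :=
  IntervalPair Om u v ∧ HCont Om u v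

/-- Lower endpoint of the pointwise interval product. -/
noncomputable def imin {n : ℕ} (u₁ v₁ u₂ v₂ : Pt n → ℝ) (x : Pt n) : ℝ :=
  min (min (u₁ x * u₂ x) (u₁ x * v₂ x)) (min (v₁ x * u₂ x) (v₁ x * v₂ x))

/-- Upper endpoint of the pointwise interval product. -/
noncomputable def imax {n : ℕ} (u₁ v₁ u₂ v₂ : Pt n → ℝ) (x : Pt n) : ℝ :=
  max (max (u₁ x * u₂ x) (u₁ x * v₂ x)) (max (v₁ x * u₂ x) (v₁ x * v₂ x))

/-- `(pl, pu)` is the H-continuous pair contained pointwise in the interval sum of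
`(u₁, v₁)` and `(u₂, v₂)`, i.e. `(pl, pu) = (u₁,v₁) ⊕ (u₂,v₂)`. -/
def IsOplus {n : ℕ} (Om : Set (Pt n)) (u₁ v₁ u₂ v₂ pl pu : Pt n → ℝ) : Prop :=
  HContPair Om pl pu ∧
    ∀ x ∈ Om, u₁ x + u₂ x ≤ pl x ∧ pl x ≤ pu x ∧ pu x ≤ v₁ x + v₂ x

/-- `(ql, qu)` is the H-continuous pair contained pointwise in the interval product of
`(u₁, v₁)` and `(u₂, v₂)`, i.e. `(ql, qu) = (u₁,v₁) ⊗ (u₂,v₂)`. -/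
def IsOtimes {n : ℕ} (Om : Set (Pt n)) (u₁ v₁ u₂ v₂ ql qu : Pt n → ℝ) : Prop :=
  HContPair Om ql qu ∧
    ∀ x ∈ Om, imin u₁ v₁ u₂ v₂ x ≤ ql x ∧ ql x ≤ qu x ∧ qu x ≤ imax u₁ v₁ u₂ v₂ x

section helpers

variable {n : ℕ} {Om : Set (Pt n)}

def BB (Om : Set (Pt n)) (f : Pt n → ℝ) : Prop :=
  ∀ x ∈ Om, ∀ δ : ℝ, ∃ C : ℝ, ∀ y ∈ Om, ‖y - x‖ < δ → |f y| ≤ C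

lemma BB.loc {f : Pt n → ℝ} (h : BB Om f) : LocBddOn Om Om f := by
  intro x hx
  obtain ⟨C, hC⟩ := h x hx 1
  exact ⟨1, one_pos, C + 1, fun y hy hd _ => by linarith [hC y hy hd]⟩

lemma BB.neg {f : Pt n → ℝ} (h : BB Om f) : BB Om (-f) := by
  intro x hx δ
  obtain ⟨C, hC⟩ := h x hx δ
  exact ⟨C, fun y hy hd => by simpa using hC y hy hd⟩

lemma BB.between {u v p : Pt n → ℝ} (hu : BB Om u) (hv : BB Om v)
    (h : ∀ x ∈ Om, u x ≤ p x ∧ p x ≤ v x) : BB Om p := by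
  intro x hx δ
  obtain ⟨C, hC⟩ := hu x hx δ
  obtain ⟨C', hC'⟩ := hv x hx δ
  refine ⟨max C C', fun y hy hd => ?_⟩
  have h1 := abs_le.1 (hC y hy hd)
  have h2 := abs_le.1 (hC' y hy hd)
  have h3 := le_max_left C C'
  have h4 := le_max_right C C'
  have := h y hy
  exact abs_le.2 ⟨by linarith, by linarith⟩

lemma Shigh_eq (f : Pt n → ℝ) (x : Pt n) : Shigh Om Om f x = - Ilow Om Om (-f) x := by
  unfold Shigh Ilow
  have key : ∀ δ : ℝ, sInf ((-f) '' {y | y ∈ Om ∧ ‖y - x‖ < δ ∧ y ∈ Om})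
      = - sSup (f '' {y | y ∈ Om ∧ ‖y - x‖ < δ ∧ y ∈ Om}) := by
    intro δ
    rw [Real.sInf_def]
    congr 2
    ext a
    simp [Set.mem_image]
  rw [Real.sInf_def]
  congr 2
  ext a
  simp only [Set.mem_neg, Set.mem_setOf_eq, key]
  constructor
  · rintro ⟨δ, h, e⟩
    exact ⟨δ, h, by linarith⟩
  · rintro ⟨δ, h, e⟩
    exact ⟨δ, h, by linarith⟩

lemma Ilow_eq (f : Pt n → ℝ) (x : Pt n) : Ilow Om Om f x = - Shigh Om Om (-f) x := by
  rw [Shigh_eq, neg_neg, neg_neg]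

lemma bddA (f : Pt n → ℝ) {x : Pt n} (hx : x ∈ Om) : BddAbove {a : ℝ | ∃ δ : ℝ, 0 < δ ∧
    a = sInf (f '' {y | y ∈ Om ∧ ‖y - x‖ < δ ∧ y ∈ Om})} := by
  refine ⟨max (f x) 0, ?_⟩
  rintro a ⟨δ, hδ, rfl⟩
  by_cases hb : BddBelow (f '' {y | y ∈ Om ∧ ‖y - x‖ < δ ∧ y ∈ Om})
  · exact (csInf_le hb ⟨x, ⟨hx, by simpa using hδ, hx⟩, rfl⟩).trans (le_max_left _ _)
  · rw [Real.sInf_of_not_bddBelow hb]; exact le_max_right _ _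

lemma le_I {f : Pt n → ℝ} {x : Pt n} (hx : x ∈ Om) {a δ : ℝ} (hδ : 0 < δ)
    (h : ∀ y ∈ Om, ‖y - x‖ < δ → a ≤ f y) : a ≤ Ilow Om Om f x := by
  refine le_trans ?_ (le_csSup (bddA f hx) ⟨δ, hδ, rfl⟩)
  refine le_csInf ⟨f x, x, ⟨hx, by simpa using hδ, hx⟩, rfl⟩ ?_
  rintro _ ⟨y, ⟨hy, hd, -⟩, rfl⟩
  exact h y hy hd

lemma lt_I {f : Pt n → ℝ} (hf : BB Om f) {x : Pt n} (hx : x ∈ Om) {a : ℝ}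
    (h : a < Ilow Om Om f x) : ∃ δ : ℝ, 0 < δ ∧ ∀ y ∈ Om, ‖y - x‖ < δ → a < f y := by
  unfold Ilow at h
  obtain ⟨_, ⟨δ, hδ, rfl⟩, hlt⟩ := exists_lt_of_lt_csSup (by exact ⟨_, 1, one_pos, rfl⟩) h
  refine ⟨δ, hδ, fun y hy hd => hlt.trans_le (csInf_le ?_ ⟨y, ⟨hy, hd, hy⟩, rfl⟩)⟩
  obtain ⟨C, hC⟩ := hf x hx δ
  refine ⟨-C, ?_⟩
  rintro _ ⟨z, ⟨hz, hd, -⟩, rfl⟩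
  exact (abs_le.1 (hC z hz hd)).1

lemma S_le {f : Pt n → ℝ} {x : Pt n} (hx : x ∈ Om) {a δ : ℝ} (hδ : 0 < δ)
    (h : ∀ y ∈ Om, ‖y - x‖ < δ → f y ≤ a) : Shigh Om Om f x ≤ a := by
  rw [Shigh_eq]
  have := le_I (f := -f) (a := -a) hx hδ (fun y hy hd => by simpa using h y hy hd)
  linarith

lemma S_lt {f : Pt n → ℝ} (hf : BB Om f) {x : Pt n} (hx : x ∈ Om) {a : ℝ}
    (h : Shigh Om Om f x < a) : ∃ δ : ℝ, 0 < δ ∧ ∀ y ∈ Om, ‖y - x‖ < δ → f y < a := by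
  rw [Shigh_eq] at h
  obtain ⟨δ, hδ, h'⟩ := lt_I hf.neg hx (a := -a) (by linarith)
  exact ⟨δ, hδ, fun y hy hd => by simpa using h' y hy hd⟩

lemma I_le {f : Pt n → ℝ} (hf : BB Om f) : ∀ x ∈ Om, Ilow Om Om f x ≤ f x := by
  intro x hx
  refine le_of_forall_lt fun a ha => ?_
  obtain ⟨δ, hδ, h⟩ := lt_I hf hx ha
  exact h x hx (by simpa using hδ)

lemma le_S {f : Pt n → ℝ} (hf : BB Om f) : ∀ x ∈ Om, f x ≤ Shigh Om Om f x := by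
  intro x hx
  have := I_le hf.neg x hx
  rw [Shigh_eq]
  simp only [Pi.neg_apply] at this
  linarith

lemma I_mono {f g : Pt n → ℝ} (hf : BB Om f) (h : ∀ x ∈ Om, f x ≤ g x) :
    ∀ x ∈ Om, Ilow Om Om f x ≤ Ilow Om Om g x := by
  intro x hx
  refine le_of_forall_lt_imp_le_of_dense fun a ha => ?_
  obtain ⟨δ, hδ, h'⟩ := lt_I hf hx ha
  exact le_I hx hδ fun y hy hd => (h' y hy hd).le.trans (h y hy)

lemma S_mono {f g : Pt n → ℝ} (hg : BB Om g) (h : ∀ x ∈ Om, f x ≤ g x) :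
    ∀ x ∈ Om, Shigh Om Om f x ≤ Shigh Om Om g x := by
  intro x hx
  have := I_mono (f := -g) (g := -f) hg.neg (fun y hy => by simpa using h y hy) x hx
  rw [Shigh_eq, Shigh_eq]
  linarith

lemma BB.I {f : Pt n → ℝ} (hf : BB Om f) : BB Om (Ilow Om Om f) := by
  intro x hx δ
  obtain ⟨C, hC⟩ := hf x hx (δ + 1)
  refine ⟨C, fun y hy hd => abs_le.2 ⟨?_, ?_⟩⟩
  · refine le_I hy one_pos fun z hz hzd => (abs_le.1 (hC z hz ?_)).1
    calc ‖z - x‖ ≤ ‖z - y‖ + ‖y - x‖ := norm_sub_le_norm_sub_add_norm_sub _ _ _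
      _ < δ + 1 := by linarith
  · exact (I_le hf y hy).trans (abs_le.1 (hC y hy (by linarith))).2

lemma BB.S {f : Pt n → ℝ} (hf : BB Om f) : BB Om (Shigh Om Om f) := by
  have : Shigh Om Om f = - Ilow Om Om (-f) := funext fun x => Shigh_eq f x
  rw [this]
  exact hf.neg.I.neg

lemma I_idem {f : Pt n → ℝ} (hf : BB Om f) :
    ∀ x ∈ Om, Ilow Om Om (Ilow Om Om f) x = Ilow Om Om f x := by
  intro x hx
  refine le_antisymm (I_le hf.I x hx) (le_of_forall_lt_imp_le_of_dense fun a ha => ?_)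
  obtain ⟨δ, hδ, h⟩ := lt_I hf hx ha
  refine le_I hx (half_pos hδ) fun y hy hd => le_I hy (half_pos hδ) fun z hz hzd => ?_
  refine (h z hz ?_).le
  calc ‖z - x‖ ≤ ‖z - y‖ + ‖y - x‖ := norm_sub_le_norm_sub_add_norm_sub _ _ _
    _ < δ := by linarith

lemma S_idem {f : Pt n → ℝ} (hf : BB Om f) :
    ∀ x ∈ Om, Shigh Om Om (Shigh Om Om f) x = Shigh Om Om f x := by
  intro x hx
  have e : - Shigh Om Om f = Ilow Om Om (-f) := by
    funext x; rw [Pi.neg_apply, Shigh_eq, neg_neg]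
  rw [Shigh_eq, e, I_idem hf.neg x hx, ← Shigh_eq]

lemma FH1 {h : Pt n → ℝ} (hh : BB Om h) :
    HContPair Om (Ilow Om Om (Ilow Om Om (Shigh Om Om h)))
      (Shigh Om Om (Ilow Om Om (Shigh Om Om h))) := by
  set w := Ilow Om Om (Shigh Om Om h) with hw
  have bw : BB Om w := hh.S.I
  have iw : ∀ x ∈ Om, Ilow Om Om w x = w x := I_idem hh.S
  refine ⟨⟨bw.I.loc, bw.S.loc, fun x hx => (I_le bw x hx).trans (le_S bw x hx)⟩, ?_⟩
  intro p q _ _ hpq x hx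
  have bp : BB Om p := bw.I.between bw.S fun x hx =>
    ⟨(hpq x hx).1, (hpq x hx).2.1.trans (hpq x hx).2.2⟩
  have bq : BB Om q := bw.I.between bw.S fun x hx =>
    ⟨(hpq x hx).1.trans (hpq x hx).2.1, (hpq x hx).2.2⟩
  constructor
  · apply le_antisymm
    · rw [iw x hx]
      refine I_mono bp (fun y hy => ?_) x hx
      have h1 := hpq y hy
      have h2 := S_mono hh.S (I_le hh.S) y hy
      rw [S_idem hh y hy] at h2
      linarith
    · rw [← I_idem bw x hx]
      exact I_mono bw.I (fun y hy => (hpq y hy).1) x hx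
  · apply le_antisymm
    · rw [← S_idem bw x hx]
      exact S_mono bw.S (fun y hy => (hpq y hy).2.2) x hx
    · refine S_mono bq (fun y hy => ?_) x hx
      have h1 := hpq y hy
      have h2 := iw y hy
      linarith

lemma FH2 {h : Pt n → ℝ} (hh : BB Om h) :
    HContPair Om (Ilow Om Om (Shigh Om Om (Ilow Om Om h)))
      (Shigh Om Om (Shigh Om Om (Ilow Om Om h))) := by
  set w := Shigh Om Om (Ilow Om Om h) with hw
  have bw : BB Om w := hh.I.S
  have iw : ∀ x ∈ Om, Shigh Om Om w x = w x := S_idem hh.I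
  refine ⟨⟨bw.I.loc, bw.S.loc, fun x hx => (I_le bw x hx).trans (le_S bw x hx)⟩, ?_⟩
  intro p q _ _ hpq x hx
  have bp : BB Om p := bw.I.between bw.S fun x hx =>
    ⟨(hpq x hx).1, (hpq x hx).2.1.trans (hpq x hx).2.2⟩
  have bq : BB Om q := bw.I.between bw.S fun x hx =>
    ⟨(hpq x hx).1.trans (hpq x hx).2.1, (hpq x hx).2.2⟩
  constructor
  · apply le_antisymm
    · refine I_mono bp (fun y hy => ?_) x hx
      have h1 := hpq y hy
      have h2 := iw y hy
      linarith
    · rw [← I_idem bw x hx]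
      exact I_mono bw.I (fun y hy => (hpq y hy).1) x hx
  · apply le_antisymm
    · rw [← S_idem bw x hx]
      exact S_mono bw.S (fun y hy => (hpq y hy).2.2) x hx
    · rw [iw x hx]
      refine S_mono bq (fun y hy => ?_) x hx
      have h1 := hpq y hy
      have h2 := I_mono hh.I (le_S hh.I) y hy
      rw [I_idem hh y hy] at h2
      linarith

lemma low_bdd {u : Pt n → ℝ} (h : ∀ x ∈ Om, Ilow Om Om u x = u x) :
    ∀ x ∈ Om, ∀ δ : ℝ, ∃ C : ℝ, ∀ y ∈ Om, ‖y - x‖ < δ → C ≤ u y := by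
  intro x hx δ
  by_contra! hc
  obtain ⟨y, hy, hyd, hlt⟩ := hc (-1)
  have hδ : 0 < δ := (norm_nonneg _).trans_lt hyd
  have hnb : ¬ BddBelow (u '' {z | z ∈ Om ∧ ‖z - y‖ < δ + δ ∧ z ∈ Om}) := by
    rintro ⟨C, hC⟩
    obtain ⟨z, hz, hzd, hlt⟩ := hc C
    refine absurd (hC ⟨z, ⟨hz, ?_, hz⟩, rfl⟩) (not_le.2 hlt)
    calc ‖z - y‖ ≤ ‖z - x‖ + ‖x - y‖ := norm_sub_le_norm_sub_add_norm_sub _ _ _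
      _ < δ + δ := by rw [norm_sub_rev x y]; linarith
  have h0 : (0:ℝ) ≤ Ilow Om Om u y :=
    le_csSup (bddA u hy) ⟨δ + δ, by linarith, (Real.sInf_of_not_bddBelow hnb).symm⟩
  rw [h y hy] at h0
  linarith

lemma hc_self {u v : Pt n → ℝ} (h : HContPair Om u v) :
    ∀ x ∈ Om, Ilow Om Om u x = u x ∧ Shigh Om Om v x = v x :=
  h.2 u v h.1.1 h.1.2.1 fun x hx => ⟨le_rfl, h.1.2.2 x hx, le_rfl⟩

lemma hc_u {u v : Pt n → ℝ} (h : HContPair Om u v) :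
    ∀ x ∈ Om, Ilow Om Om u x = u x ∧ Shigh Om Om u x = v x :=
  h.2 u u h.1.1 h.1.1 fun x hx => ⟨le_rfl, le_rfl, h.1.2.2 x hx⟩

lemma hc_v {u v : Pt n → ℝ} (h : HContPair Om u v) :
    ∀ x ∈ Om, Ilow Om Om v x = u x ∧ Shigh Om Om v x = v x :=
  h.2 v v h.1.2.1 h.1.2.1 fun x hx => ⟨h.1.2.2 x hx, le_rfl, le_rfl⟩

lemma hc_BB {u v : Pt n → ℝ} (h : HContPair Om u v) : BB Om u ∧ BB Om v := by
  have key : ∀ x ∈ Om, ∀ δ : ℝ, ∃ C : ℝ, ∀ y ∈ Om, ‖y - x‖ < δ → -C ≤ u y ∧ v y ≤ C := by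
    intro x hx δ
    obtain ⟨C, hC⟩ := low_bdd (fun x hx => (hc_self h x hx).1) x hx δ
    obtain ⟨C', hC'⟩ := low_bdd (u := -v) (Om := Om) (fun x hx => by
      have := (hc_self h x hx).2
      rw [Shigh_eq] at this
      rw [Pi.neg_apply]
      linarith) x hx δ
    refine ⟨max (-C) (-C'), fun y hy hd => ?_⟩
    have h1 := hC y hy hd
    have h2 := hC' y hy hd
    rw [Pi.neg_apply] at h2
    have h3 := le_max_left (-C) (-C')
    have h4 := le_max_right (-C) (-C')
    exact ⟨by linarith, by linarith⟩
  constructor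
  all_goals
    intro x hx δ
    obtain ⟨C, hC⟩ := key x hx δ
    refine ⟨C, fun y hy hd => ?_⟩
    have h1 := hC y hy hd
    have h2 := h.1.2.2 y hy
    exact abs_le.2 ⟨by linarith, by linarith⟩

lemma corner {u₁ v₁ u₂ v₂ a b K : ℝ} (ha : u₁ ≤ a) (ha' : a ≤ v₁) (hb : u₂ ≤ b) (hb' : b ≤ v₂)
    (h1 : u₁ * u₂ ≤ K) (h2 : u₁ * v₂ ≤ K) (h3 : v₁ * u₂ ≤ K) (h4 : v₁ * v₂ ≤ K) :
    a * b ≤ K := by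
  have e1 : u₁ * b ≤ K := by
    rcases le_total 0 u₁ with h | h <;> nlinarith
  have e2 : v₁ * b ≤ K := by
    rcases le_total 0 v₁ with h | h <;> nlinarith
  rcases le_total 0 b with h | h <;> nlinarith

lemma corner_eps {u₁ v₁ u₂ v₂ K ε : ℝ} (hε : 0 < ε) (huv₁ : u₁ ≤ v₁) (huv₂ : u₂ ≤ v₂)
    (h1 : u₁ * u₂ ≤ K) (h2 : u₁ * v₂ ≤ K) (h3 : v₁ * u₂ ≤ K) (h4 : v₁ * v₂ ≤ K) :
    ∃ η : ℝ, 0 < η ∧ ∀ a b : ℝ, u₁ - η ≤ a → a ≤ v₁ + η → u₂ - η ≤ b → b ≤ v₂ + η →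
      a * b ≤ K + ε := by
  obtain ⟨C, hC⟩ : ∃ C, C = |u₁| + |v₁| + |u₂| + |v₂| + 1 := ⟨_, rfl⟩
  have p1 := abs_nonneg u₁
  have p2 := abs_nonneg v₁
  have p3 := abs_nonneg u₂
  have p4 := abs_nonneg v₂
  have q1 := abs_le.1 (le_refl |u₁|)
  have q2 := abs_le.1 (le_refl |v₁|)
  have q3 := abs_le.1 (le_refl |u₂|)
  have q4 := abs_le.1 (le_refl |v₂|)
  have hCpos : 0 < C := by linarith
  refine ⟨min 1 (ε / (2 * C)), by positivity, ?_⟩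
  set η := min 1 (ε / (2 * C)) with hη
  have hη0 : 0 < η := by positivity
  have hη1 : η ≤ 1 := min_le_left _ _
  have hη2 : η * (2 * C) ≤ ε := by
    have := min_le_right 1 (ε / (2 * C))
    rwa [← hη, le_div_iff₀ (by positivity)] at this
  have gen : ∀ s t : ℝ, |s| = η → |t| = η → ∀ c d : ℝ, |c| ≤ C - 1 → |d| ≤ C - 1 → c * d ≤ K →
      (c + s) * (d + t) ≤ K + ε := by
    intro s t hs ht c d hc hd hcd
    have e1 : c * t ≤ (C - 1) * η := by
      calc c * t ≤ |c * t| := le_abs_self _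
        _ = |c| * η := by rw [abs_mul, ht]
        _ ≤ _ := by gcongr
    have e2 : s * d ≤ (C - 1) * η := by
      calc s * d ≤ |s * d| := le_abs_self _
        _ = |d| * η := by rw [abs_mul, hs, mul_comm]
        _ ≤ _ := by gcongr
    have e3 : s * t ≤ η * η := by
      calc s * t ≤ |s * t| := le_abs_self _
        _ = η * η := by rw [abs_mul, hs, ht]
    nlinarith
  have sη : |η| = η := abs_of_pos hη0
  have sη' : |-η| = η := by rw [abs_neg, sη]
  intro a b ha ha' hb hb'
  refine corner ha ha' hb hb' ?_ ?_ ?_ ?_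
  · exact gen (-η) (-η) sη' sη' _ _ (by linarith) (by linarith) h1
  · exact gen (-η) (η) sη' sη _ _ (by linarith) (by linarith) h2
  · exact gen (η) (-η) sη sη' _ _ (by linarith) (by linarith) h3
  · exact gen (η) (η) sη sη _ _ (by linarith) (by linarith) h4

lemma usc_M {u₁ v₁ u₂ v₂ : Pt n → ℝ} (bu₁ : BB Om u₁) (bv₁ : BB Om v₁)
    (bu₂ : BB Om u₂) (bv₂ : BB Om v₂)
    (hu₁ : ∀ x ∈ Om, Ilow Om Om u₁ x = u₁ x) (hv₁ : ∀ x ∈ Om, Shigh Om Om v₁ x = v₁ x)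
    (hu₂ : ∀ x ∈ Om, Ilow Om Om u₂ x = u₂ x) (hv₂ : ∀ x ∈ Om, Shigh Om Om v₂ x = v₂ x)
    (h₁ : ∀ x ∈ Om, u₁ x ≤ v₁ x) (h₂ : ∀ x ∈ Om, u₂ x ≤ v₂ x) :
    ∀ x ∈ Om, Shigh Om Om (imax u₁ v₁ u₂ v₂) x ≤ imax u₁ v₁ u₂ v₂ x := by
  intro x hx
  refine le_of_forall_pos_le_add fun ε hε => ?_
  obtain ⟨η, hη, H⟩ := corner_eps (K := imax u₁ v₁ u₂ v₂ x) hε (h₁ x hx) (h₂ x hx)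
    (by simp [imax]) (by simp [imax]) (by simp [imax]) (by simp [imax])
  obtain ⟨d1, hd1, k1⟩ := lt_I bu₁ hx (a := u₁ x - η) (by rw [hu₁ x hx]; linarith)
  obtain ⟨d2, hd2, k2⟩ := lt_I bu₂ hx (a := u₂ x - η) (by rw [hu₂ x hx]; linarith)
  obtain ⟨d3, hd3, k3⟩ := S_lt bv₁ hx (a := v₁ x + η) (by rw [hv₁ x hx]; linarith)
  obtain ⟨d4, hd4, k4⟩ := S_lt bv₂ hx (a := v₂ x + η) (by rw [hv₂ x hx]; linarith)
  refine S_le hx (δ := min (min d1 d2) (min d3 d4)) (by positivity) fun y hy hd => ?_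
  simp only [lt_min_iff] at hd
  have l1 := k1 y hy hd.1.1
  have l2 := k2 y hy hd.1.2
  have l3 := k3 y hy hd.2.1
  have l4 := k4 y hy hd.2.2
  have l5 := h₁ y hy
  have l6 := h₂ y hy
  rw [imax]
  refine max_le (max_le ?_ ?_) (max_le ?_ ?_) <;> apply H <;> linarith

lemma imin_eq (u₁ v₁ u₂ v₂ : Pt n → ℝ) : imin u₁ v₁ u₂ v₂ = - imax (-v₁) (-u₁) u₂ v₂ := by
  funext x
  simp only [imin, imax, Pi.neg_apply, neg_mul, max_neg_neg, neg_neg]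
  rw [min_comm]

lemma lsc_m {u₁ v₁ u₂ v₂ : Pt n → ℝ} (bu₁ : BB Om u₁) (bv₁ : BB Om v₁)
    (bu₂ : BB Om u₂) (bv₂ : BB Om v₂)
    (hu₁ : ∀ x ∈ Om, Ilow Om Om u₁ x = u₁ x) (hv₁ : ∀ x ∈ Om, Shigh Om Om v₁ x = v₁ x)
    (hu₂ : ∀ x ∈ Om, Ilow Om Om u₂ x = u₂ x) (hv₂ : ∀ x ∈ Om, Shigh Om Om v₂ x = v₂ x)
    (h₁ : ∀ x ∈ Om, u₁ x ≤ v₁ x) (h₂ : ∀ x ∈ Om, u₂ x ≤ v₂ x) :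
    ∀ x ∈ Om, imin u₁ v₁ u₂ v₂ x ≤ Ilow Om Om (imin u₁ v₁ u₂ v₂) x := by
  intro x hx
  have := usc_M bv₁.neg bu₁.neg bu₂ bv₂
    (fun x hx => by rw [Pi.neg_apply, ← hv₁ x hx, Shigh_eq, neg_neg])
    (fun x hx => by rw [Pi.neg_apply, ← hu₁ x hx, Ilow_eq, neg_neg]) hu₂ hv₂
    (fun x hx => by simpa using h₁ x hx) h₂ x hx
  rw [Ilow_eq, imin_eq, neg_neg, Pi.neg_apply]
  linarith

lemma width {u v : Pt n → ℝ} (h : HContPair Om u v) {x : Pt n} (hx : x ∈ Om) {δ ε : ℝ}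
    (hδ : 0 < δ) (hε : 0 < ε) :
    ∃ y ∈ Om, ‖y - x‖ < δ ∧ ∃ r : ℝ, 0 < r ∧ ∀ z ∈ Om, ‖z - y‖ < r → v z - u z < ε := by
  obtain ⟨bu, bv⟩ := hc_BB h
  obtain ⟨d, hd, k⟩ := S_lt bv hx (a := v x + ε / 2) (by rw [(hc_v h x hx).2]; linarith)
  have : ∃ y ∈ Om, ‖y - x‖ < min δ d ∧ v x - ε / 2 < u y := by
    by_contra! hc
    have := S_le hx (lt_min hδ hd) hc
    rw [(hc_u h x hx).2] at this
    linarith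
  obtain ⟨y, hy, hyd, hlt⟩ := this
  rw [lt_min_iff] at hyd
  obtain ⟨r, hr, k'⟩ := lt_I bu hy (a := v x - ε / 2) (by rw [(hc_u h y hy).1]; exact hlt)
  refine ⟨y, hy, hyd.1, min r (d - ‖y - x‖), lt_min hr (by linarith), fun z hz hzd => ?_⟩
  rw [lt_min_iff] at hzd
  have a1 := k' z hz hzd.1
  have a2 := k z hz (by
    have := norm_sub_le_norm_sub_add_norm_sub z y x
    linarith)
  linarith

lemma prod_diff {a b a' b' C η : ℝ} (hC : |a| ≤ C) (hC' : |b'| ≤ C) (h1 : |a - a'| ≤ η)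
    (h2 : |b - b'| ≤ η) : a * b ≤ a' * b' + 2 * C * η := by
  have hη : 0 ≤ η := (abs_nonneg _).trans h1
  have hC0 : 0 ≤ C := (abs_nonneg _).trans hC
  have e1 : a * (b - b') ≤ C * η := by
    calc _ ≤ |a * (b - b')| := le_abs_self _
      _ = |a| * |b - b'| := abs_mul _ _
      _ ≤ _ := by gcongr
  have e2 : (a - a') * b' ≤ η * C := by
    calc _ ≤ |(a - a') * b'| := le_abs_self _
      _ = |a - a'| * |b'| := abs_mul _ _
      _ ≤ _ := by gcongr
  nlinarith

lemma Mm_close {u₁ v₁ u₂ v₂ : Pt n → ℝ} {y : Pt n} {C η : ℝ} (c1 : |u₁ y| ≤ C) (c2 : |v₁ y| ≤ C)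
    (c3 : |u₂ y| ≤ C) (c4 : |v₂ y| ≤ C) (h₁ : u₁ y ≤ v₁ y) (h₂ : u₂ y ≤ v₂ y)
    (w₁ : v₁ y - u₁ y ≤ η) (w₂ : v₂ y - u₂ y ≤ η) :
    imax u₁ v₁ u₂ v₂ y ≤ imin u₁ v₁ u₂ v₂ y + 2 * C * η := by
  rw [← sub_le_iff_le_add, imin]
  refine le_min (le_min ?_ ?_) (le_min ?_ ?_) <;> rw [sub_le_iff_le_add, imax] <;>
    refine max_le (max_le ?_ ?_) (max_le ?_ ?_) <;> apply prod_diff <;>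
    first | assumption | (rw [abs_le]; constructor <;> linarith)

lemma I_M_le_S_m {u₁ v₁ u₂ v₂ : Pt n → ℝ} (h₁ : HContPair Om u₁ v₁) (h₂ : HContPair Om u₂ v₂)
    (bM : BB Om (imax u₁ v₁ u₂ v₂)) (bm : BB Om (imin u₁ v₁ u₂ v₂)) :
    ∀ x ∈ Om, Ilow Om Om (imax u₁ v₁ u₂ v₂) x ≤ Shigh Om Om (imin u₁ v₁ u₂ v₂) x := by
  intro x hx
  by_contra! hlt
  obtain ⟨bu₁, bv₁⟩ := hc_BB h₁
  obtain ⟨bu₂, bv₂⟩ := hc_BB h₂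
  obtain ⟨s, hs1, hs2⟩ := exists_between hlt
  obtain ⟨t, ht1, ht2⟩ := exists_between hs2
  obtain ⟨d, hd, k⟩ := lt_I bM hx ht2
  obtain ⟨d', hd', k'⟩ := S_lt bm hx hs1
  obtain ⟨C1, hC1⟩ := bu₁ x hx 1
  obtain ⟨C2, hC2⟩ := bv₁ x hx 1
  obtain ⟨C3, hC3⟩ := bu₂ x hx 1
  obtain ⟨C4, hC4⟩ := bv₂ x hx 1
  obtain ⟨C, hC0, hC⟩ : ∃ C : ℝ, 0 < C ∧ C1 ≤ C ∧ C2 ≤ C ∧ C3 ≤ C ∧ C4 ≤ C :=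
    ⟨|C1| + |C2| + |C3| + |C4| + 1, by positivity, by
      have := le_abs_self C1
      have := le_abs_self C2
      have := le_abs_self C3
      have := le_abs_self C4
      have := abs_nonneg C1
      have := abs_nonneg C2
      have := abs_nonneg C3
      have := abs_nonneg C4
      refine ⟨?_, ?_, ?_, ?_⟩ <;> linarith⟩
  have hη : 0 < (t - s) / (2 * C) := div_pos (by linarith) (by positivity)
  obtain ⟨δ, hδ⟩ : ∃ δ, δ = min 1 (min d d') := ⟨_, rfl⟩
  have hδ0 : 0 < δ := by rw [hδ]; positivity
  obtain ⟨y, hy, hyd, r, hr, hw⟩ := width h₁ hx (half_pos hδ0) hη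
  obtain ⟨z, hz, hzd, r', hr', hw'⟩ := width h₂ hy (δ := min r (δ / 2)) (by positivity) hη
  rw [lt_min_iff] at hzd
  have w1 := hw z hz hzd.1
  have w2 := hw' z hz (by simpa using hr')
  have hzx : ‖z - x‖ < δ := by
    have := norm_sub_le_norm_sub_add_norm_sub z y x
    linarith
  rw [hδ, lt_min_iff, lt_min_iff] at hzx
  have := Mm_close ((hC1 z hz hzx.1).trans hC.1) ((hC2 z hz hzx.1).trans hC.2.1)
    ((hC3 z hz hzx.1).trans hC.2.2.1) ((hC4 z hz hzx.1).trans hC.2.2.2)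
    (h₁.1.2.2 z hz) (h₂.1.2.2 z hz) w1.le w2.le
  rw [mul_div_cancel₀ _ (by positivity)] at this
  linarith [k z hz hzx.2.1, k' z hz hzx.2.2]

lemma BB_prod {u₁ v₁ u₂ v₂ : Pt n → ℝ} (bu₁ : BB Om u₁) (bv₁ : BB Om v₁)
    (bu₂ : BB Om u₂) (bv₂ : BB Om v₂) : BB Om (imax u₁ v₁ u₂ v₂) := by
  have mul : ∀ {f g : Pt n → ℝ}, BB Om f → BB Om g → BB Om (fun x => f x * g x) := by
    intro f g hf hg x hx δ
    obtain ⟨C, hC⟩ := hf x hx δ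
    obtain ⟨C', hC'⟩ := hg x hx δ
    refine ⟨C * C', fun y hy hd => ?_⟩
    rw [abs_mul]
    exact mul_le_mul (hC y hy hd) (hC' y hy hd) (abs_nonneg _)
      ((abs_nonneg _).trans (hC y hy hd))
  have mx : ∀ {f g : Pt n → ℝ}, BB Om f → BB Om g → BB Om (fun x => max (f x) (g x)) := by
    intro f g hf hg x hx δ
    obtain ⟨C, hC⟩ := hf x hx δ
    obtain ⟨C', hC'⟩ := hg x hx δ
    exact ⟨max C C', fun y hy hd => abs_max_le_max_abs_abs.trans
      (max_le_max (hC y hy hd) (hC' y hy hd))⟩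
  exact mx (mx (mul bu₁ bu₂) (mul bu₁ bv₂)) (mx (mul bv₁ bu₂) (mul bv₁ bv₂))

end helpers

theorem stmt10 {n : ℕ} (Om : Set (Pt n)) (hOm : IsOpen Om)
    (u₁ v₁ u₂ v₂ : Pt n → ℝ)
    (h₁ : HContPair Om u₁ v₁) (h₂ : HContPair Om u₂ v₂)
    (m M : Pt n → ℝ)
    (hm : m = imin u₁ v₁ u₂ v₂) (hM : M = imax u₁ v₁ u₂ v₂) :
    HContPair Om (Ilow Om Om (Ilow Om Om (Shigh Om Om M)))
      (Shigh Om Om (Ilow Om Om (Shigh Om Om M))) ∧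
    (∀ x ∈ Om, m x ≤ Ilow Om Om (Ilow Om Om (Shigh Om Om M)) x ∧
      Ilow Om Om (Ilow Om Om (Shigh Om Om M)) x ≤
        Shigh Om Om (Ilow Om Om (Shigh Om Om M)) x ∧
      Shigh Om Om (Ilow Om Om (Shigh Om Om M)) x ≤ M x) ∧
    HContPair Om (Ilow Om Om (Shigh Om Om (Ilow Om Om m)))
      (Shigh Om Om (Shigh Om Om (Ilow Om Om m))) ∧
    (∀ x ∈ Om, m x ≤ Ilow Om Om (Shigh Om Om (Ilow Om Om m)) x ∧
      Ilow Om Om (Shigh Om Om (Ilow Om Om m)) x ≤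
        Shigh Om Om (Shigh Om Om (Ilow Om Om m)) x ∧
      Shigh Om Om (Shigh Om Om (Ilow Om Om m)) x ≤ M x) ∧
    (∀ ql qu : Pt n → ℝ, IsOtimes Om u₁ v₁ u₂ v₂ ql qu →
      ∀ x ∈ Om,
        ql x = Ilow Om Om (Ilow Om Om (Shigh Om Om M)) x ∧
        qu x = Shigh Om Om (Ilow Om Om (Shigh Om Om M)) x ∧
        ql x = Ilow Om Om (Shigh Om Om (Ilow Om Om m)) x ∧
        qu x = Shigh Om Om (Shigh Om Om (Ilow Om Om m)) x) := by
  obtain ⟨bu₁, bv₁⟩ := hc_BB h₁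
  obtain ⟨bu₂, bv₂⟩ := hc_BB h₂
  have bM : BB Om M := hM ▸ BB_prod bu₁ bv₁ bu₂ bv₂
  have bm : BB Om m := by
    rw [hm, imin_eq]
    exact (BB_prod bv₁.neg bu₁.neg bu₂ bv₂).neg
  have sM : ∀ x ∈ Om, Shigh Om Om M x ≤ M x := hM ▸ usc_M bu₁ bv₁ bu₂ bv₂
    (fun x hx => (hc_self h₁ x hx).1) (fun x hx => (hc_self h₁ x hx).2)
    (fun x hx => (hc_self h₂ x hx).1) (fun x hx => (hc_self h₂ x hx).2) h₁.1.2.2 h₂.1.2.2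
  have im : ∀ x ∈ Om, m x ≤ Ilow Om Om m x := hm ▸ lsc_m bu₁ bv₁ bu₂ bv₂
    (fun x hx => (hc_self h₁ x hx).1) (fun x hx => (hc_self h₁ x hx).2)
    (fun x hx => (hc_self h₂ x hx).1) (fun x hx => (hc_self h₂ x hx).2) h₁.1.2.2 h₂.1.2.2
  have key : ∀ x ∈ Om, Ilow Om Om M x ≤ Shigh Om Om m x := by
    subst hm hM
    exact I_M_le_S_m h₁ h₂ bM bm
  have mM : ∀ x ∈ Om, m x ≤ M x := by
    intro x _
    subst hm hM
    exact (min_le_left _ _).trans ((min_le_left _ _).trans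
      ((le_max_left _ _).trans (le_max_left _ _)))
  have bISM := bM.S.I
  have bSIm := bm.I.S
  have IM1 : ∀ x ∈ Om, Ilow Om Om (Shigh Om Om M) x ≤ Ilow Om Om M x := I_mono bM.S sM
  have IM2 : ∀ x ∈ Om, Ilow Om Om M x ≤ Ilow Om Om (Shigh Om Om M) x := I_mono bM (le_S bM)
  have Sm1 : ∀ x ∈ Om, Shigh Om Om m x ≤ Shigh Om Om (Ilow Om Om m) x := S_mono bm.I im
  have Sm2 : ∀ x ∈ Om, Shigh Om Om (Ilow Om Om m) x ≤ Shigh Om Om m x := S_mono bm (I_le bm)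
  have iiM := I_idem bM.S
  have ssm := S_idem bm.I
  have ImM := I_mono bm mM
  have SmM := S_mono bM mM
  refine ⟨FH1 bM, ?_, FH2 bm, ?_, ?_⟩
  · intro x hx
    refine ⟨?_, (I_le bISM x hx).trans (le_S bISM x hx), ?_⟩
    · linarith [iiM x hx, IM2 x hx, ImM x hx, im x hx]
    · have := S_mono bM (fun y hy => (IM1 y hy).trans (I_le bM y hy)) x hx
      linarith [sM x hx]
  · intro x hx
    refine ⟨?_, (I_le bSIm x hx).trans (le_S bSIm x hx), ?_⟩
    · have := I_mono bm (fun y hy => (le_S bm y hy).trans (Sm1 y hy)) x hx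
      linarith [im x hx]
    · linarith [ssm x hx, Sm2 x hx, SmM x hx, sM x hx]
  · rintro ql qu ⟨hq, hin⟩
    subst hm hM
    obtain ⟨bl, bu⟩ := hc_BB hq
    have quS := S_mono bl (fun y hy => (hin y hy).1)
    have qlI := I_mono bu (fun y hy => (hin y hy).2.2)
    -- lower bound for qu
    have q1 : ∀ x ∈ Om, Shigh Om Om (imin u₁ v₁ u₂ v₂) x ≤ qu x := fun x hx => by
      linarith [quS x hx, (hc_u hq x hx).2]
    have q2 : ∀ x ∈ Om, ql x ≤ Ilow Om Om (imax u₁ v₁ u₂ v₂) x := fun x hx => by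
      linarith [qlI x hx, (hc_v hq x hx).1]
    have q3 : ∀ x ∈ Om, Ilow Om Om (imax u₁ v₁ u₂ v₂) x ≤ ql x := fun x hx => by
      have := I_mono bM.I (fun y hy => (key y hy).trans (q1 y hy)) x hx
      linarith [I_idem bM x hx, (hc_v hq x hx).1]
    have q4 : ∀ x ∈ Om, qu x ≤ Shigh Om Om (imin u₁ v₁ u₂ v₂) x := fun x hx => by
      have := S_mono bm.S (fun y hy => (q2 y hy).trans (key y hy)) x hx
      linarith [S_idem bm x hx, (hc_u hq x hx).2]
    intro x hx
    refine ⟨?_, ?_, ?_, ?_⟩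
    · linarith [iiM x hx, IM1 x hx, IM2 x hx, q2 x hx, q3 x hx]
    · have a1 := S_mono bISM (fun y hy => (q2 y hy).trans (IM2 y hy)) x hx
      have a2 := S_mono bl (fun y hy => (IM1 y hy).trans (q3 y hy)) x hx
      linarith [(hc_u hq x hx).2]
    · have a1 := I_mono bu (fun y hy => (q4 y hy).trans (Sm1 y hy)) x hx
      have a2 := I_mono bSIm (fun y hy => (Sm2 y hy).trans (q1 y hy)) x hx
      linarith [(hc_v hq x hx).1]
    · linarith [ssm x hx, Sm1 x hx, Sm2 x hx, q1 x hx, q4 x hx]
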